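/- On the open set {(x,y,z) ∈ ℝ³ : |z| < 1}, the four smooth functions 1, z, √(1−z²)·sin x, √(1−z²)·cos x span a four-dimensional space of smooth functions that is closed under the Lagrange bracket, and the resulting four-dimensional real Lie algebra is isomorphic to u(2). Explicitly, writing f₁ = 1, f₂ = z, f₃ = √(1−z²) sin x, f₄ = √(1−z²) cos x, one has {f₁, f_i} = 0 for all i, {f₂, f₃} = −f₄, {f₂, f₄} = f₃, and {f₃, f₄} = −f₂. -/

import Mathlib

noncomputable section

open Matrix

/-- `ℝ³` with coordinates `(x, y, z)`. -/
abbrev R3 : Type := ℝ × ℝ × ℝ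

/-- Partial derivative in `x` of a function on `ℝ³`. -/
noncomputable def px (f : R3 → ℝ) (p : R3) : ℝ := fderiv ℝ f p (1, 0, 0)

/-- Partial derivative in `y` of a function on `ℝ³`. -/
noncomputable def py (f : R3 → ℝ) (p : R3) : ℝ := fderiv ℝ f p (0, 1, 0)

/-- Partial derivative in `z` of a function on `ℝ³`. -/
noncomputable def pz (f : R3 → ℝ) (p : R3) : ℝ := fderiv ℝ f p (0, 0, 1)

/-- The Lagrange bracket
`{f,g} = f_x g_z − f_z g_x + z (f_y g_z − f_z g_y) + f g_y − g f_y`. -/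
noncomputable def lagr (f g : R3 → ℝ) (p : R3) : ℝ :=
  px f p * pz g p - pz f p * px g p
    + p.2.2 * (py f p * pz g p - pz f p * py g p)
    + f p * py g p - g p * py f p

/-- `f₁ = 1`. -/
noncomputable def c1 : R3 → ℝ := fun _ => 1

/-- `f₂ = z`. -/
noncomputable def c2 : R3 → ℝ := fun p => p.2.2

/-- `f₃ = √(1−z²)·sin x`. -/
noncomputable def c3 : R3 → ℝ := fun p => Real.sqrt (1 - p.2.2 ^ 2) * Real.sin p.1

/-- `f₄ = √(1−z²)·cos x`. -/
noncomputable def c4 : R3 → ℝ := fun p => Real.sqrt (1 - p.2.2 ^ 2) * Real.cos p.1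

/-- The span of `f₁, f₂, f₃, f₄` inside the functions on `ℝ³`. -/
noncomputable def Vspan : Submodule ℝ (R3 → ℝ) := Submodule.span ℝ {c1, c2, c3, c4}

/-- general element of the span -/
def comb (a b c d : ℝ) : R3 → ℝ :=
  fun p => a + b * p.2.2 + c * (Real.sqrt (1 - p.2.2 ^ 2) * Real.sin p.1)
    + d * (Real.sqrt (1 - p.2.2 ^ 2) * Real.cos p.1)

lemma one_sub_sq_pos {z : ℝ} (h : |z| < 1) : 0 < 1 - z ^ 2 := by
  have := (sq_lt_one_iff_abs_lt_one z).2 h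
  linarith

lemma comb_diff (a b c d : ℝ) (p : R3) (hp : |p.2.2| < 1) :
    DifferentiableAt ℝ (comb a b c d) p := by
  have h := (one_sub_sq_pos hp).ne'
  unfold comb
  have h1 : DifferentiableAt ℝ (fun p : R3 => Real.sqrt (1 - p.2.2 ^ 2)) p :=
    DifferentiableAt.sqrt (by fun_prop) h
  fun_prop

lemma fderiv_line (f : R3 → ℝ) (p v : R3) (d : ℝ) (hf : DifferentiableAt ℝ f p)
    (h : HasDerivAt (fun t : ℝ => f (p + t • v)) d 0) : fderiv ℝ f p v = d := by
  have := hf.hasFDerivAt.hasLineDerivAt v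
  exact HasDerivAt.unique this h

lemma comb_px (a b c d : ℝ) (p : R3) (hp : |p.2.2| < 1) :
    px (comb a b c d) p =
      Real.sqrt (1 - p.2.2 ^ 2) * (c * Real.cos p.1 - d * Real.sin p.1) := by
  apply fderiv_line _ _ _ _ (comb_diff a b c d p hp)
  simp only [comb, Prod.fst_add, Prod.snd_add, Prod.smul_fst, Prod.smul_snd, smul_eq_mul, mul_zero,
    add_zero, mul_one]
  have h0 : HasDerivAt (fun t : ℝ => p.1 + t) 1 0 := (hasDerivAt_id (0:ℝ)).const_add p.1
  have hs := h0.sin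
  have hc := h0.cos
  have := (((hs.const_mul (Real.sqrt (1 - p.2.2 ^ 2))).const_mul c).const_add (a + b * p.2.2)).add
    ((hc.const_mul (Real.sqrt (1 - p.2.2 ^ 2))).const_mul d)
  refine this.congr_deriv ?_
  simp only [add_zero]
  ring

lemma comb_py (a b c d : ℝ) (p : R3) (hp : |p.2.2| < 1) :
    py (comb a b c d) p = 0 := by
  apply fderiv_line _ _ _ _ (comb_diff a b c d p hp)
  simp only [comb, Prod.fst_add, Prod.snd_add, Prod.smul_fst, Prod.smul_snd, smul_eq_mul, mul_zero,
    add_zero, mul_one]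
  exact hasDerivAt_const _ _

lemma comb_pz (a b c d : ℝ) (p : R3) (hp : |p.2.2| < 1) :
    pz (comb a b c d) p =
      b - p.2.2 / Real.sqrt (1 - p.2.2 ^ 2) * (c * Real.sin p.1 + d * Real.cos p.1) := by
  apply fderiv_line _ _ _ _ (comb_diff a b c d p hp)
  simp only [comb, Prod.fst_add, Prod.snd_add, Prod.smul_fst, Prod.smul_snd, smul_eq_mul, mul_zero,
    add_zero, mul_one]
  have h := (one_sub_sq_pos hp).ne'
  have h0 : HasDerivAt (fun t : ℝ => p.2.2 + t) 1 0 := (hasDerivAt_id (0:ℝ)).const_add p.2.2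
  have hq := ((h0.pow 2).const_sub 1).sqrt (by simpa using h)
  have := (((h0.const_mul b).const_add a).add ((hq.mul_const (Real.sin p.1)).const_mul c)).add
    ((hq.mul_const (Real.cos p.1)).const_mul d)
  refine this.congr_deriv ?_
  have hs : Real.sqrt (1 - p.2.2 ^ 2) ≠ 0 := (Real.sqrt_pos.2 (one_sub_sq_pos hp)).ne'
  simp
  field_simp
  ring

lemma comb_lagr (a b c d a' b' c' d' : ℝ) (p : R3) (hp : |p.2.2| < 1) :
    lagr (comb a b c d) (comb a' b' c' d') p =
      comb 0 (c' * d - c * d') (b * d' - b' * d) (b' * c - b * c') p := by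
  unfold lagr
  rw [comb_px _ _ _ _ p hp, comb_px _ _ _ _ p hp, comb_py _ _ _ _ p hp, comb_py _ _ _ _ p hp,
    comb_pz _ _ _ _ p hp, comb_pz _ _ _ _ p hp]
  have hs : Real.sqrt (1 - p.2.2 ^ 2) ≠ 0 := (Real.sqrt_pos.2 (one_sub_sq_pos hp)).ne'
  have ht := Real.sin_sq_add_cos_sq p.1
  unfold comb
  generalize Real.sqrt (1 - p.2.2 ^ 2) = s at *
  field_simp
  linear_combination s * (c' * d - c * d') * p.2.2 * ht

lemma comb_eq (a b c d : ℝ) : comb a b c d = a • c1 + (b • c2 + (c • c3 + d • c4)) := by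
  funext p
  simp [comb, c1, c2, c3, c4]
  ring

lemma mem_Vspan (u : R3 → ℝ) : u ∈ Vspan ↔ ∃ a b c d, u = comb a b c d := by
  unfold Vspan
  simp only [Submodule.mem_span_insert, Submodule.mem_span_singleton, comb_eq]
  constructor
  · rintro ⟨a, _, ⟨b, _, ⟨c, _, ⟨d, rfl⟩, rfl⟩, rfl⟩, rfl⟩
    exact ⟨a, b, c, d, rfl⟩
  · rintro ⟨a, b, c, d, rfl⟩
    exact ⟨a, _, ⟨b, _, ⟨c, _, ⟨d, rfl⟩, rfl⟩, rfl⟩, rfl⟩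

/-- basis of u(2) -/
def phi : Fin 4 → Matrix (Fin 2) (Fin 2) ℂ :=
  ![!![Complex.I, 0; 0, Complex.I], !![0, Complex.I / 2; Complex.I / 2, 0],
    !![0, 1 / 2; -1 / 2, 0], !![Complex.I / 2, 0; 0, -Complex.I / 2]]

lemma phi0 : phi 0 = !![Complex.I, 0; 0, Complex.I] := rfl

lemma phi1 : phi 1 = !![0, Complex.I / 2; Complex.I / 2, 0] := rfl

lemma phi2 : phi 2 = !![0, 1 / 2; -1 / 2, 0] := rfl

lemma phi3 : phi 3 = !![Complex.I / 2, 0; 0, -Complex.I / 2] := rfl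

/-- On the open set `{|z| < 1}` the functions
`1, z, √(1−z²) sin x, √(1−z²) cos x` span a four-dimensional space closed under the
Lagrange bracket, with `{f₁, f_i} = 0`, `{f₂,f₃} = −f₄`, `{f₂,f₄} = f₃`,
`{f₃,f₄} = −f₂`, and the resulting four-dimensional real Lie algebra is isomorphic to
`u(2)` (realized as a basis of the skew-Hermitian `2 × 2` complex matrices with the same
structure constants, `f₁` corresponding to a central element). -/
theorem stmt19 :
    (∀ c : Fin 4 → ℝ,
      (∀ p : R3, |p.2.2| < 1 →
        c 0 * c1 p + c 1 * c2 p + c 2 * c3 p + c 3 * c4 p = 0) → c = 0) ∧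
    (∀ u ∈ Vspan, ∀ v ∈ Vspan, ∃ w ∈ Vspan, ∀ p : R3, |p.2.2| < 1 → lagr u v p = w p) ∧
    (∀ p : R3, |p.2.2| < 1 →
      lagr c1 c1 p = 0 ∧ lagr c1 c2 p = 0 ∧ lagr c1 c3 p = 0 ∧ lagr c1 c4 p = 0 ∧
      lagr c2 c3 p = -c4 p ∧ lagr c2 c4 p = c3 p ∧ lagr c3 c4 p = -c2 p) ∧
    (∃ φ : Fin 4 → Matrix (Fin 2) (Fin 2) ℂ,
      LinearIndependent ℝ φ ∧
      (∀ i : Fin 4, (φ i)ᴴ = -φ i) ∧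
      (∀ m : Matrix (Fin 2) (Fin 2) ℂ, mᴴ = -m → m ∈ Submodule.span ℝ (Set.range φ)) ∧
      (∀ i : Fin 4, φ 0 * φ i - φ i * φ 0 = 0) ∧
      φ 1 * φ 2 - φ 2 * φ 1 = -φ 3 ∧
      φ 1 * φ 3 - φ 3 * φ 1 = φ 2 ∧
      φ 2 * φ 3 - φ 3 * φ 2 = -φ 1) := by
  have e1 : c1 = comb 1 0 0 0 := by rw [comb_eq]; simp
  have e2 : c2 = comb 0 1 0 0 := by rw [comb_eq]; simp
  have e3 : c3 = comb 0 0 1 0 := by rw [comb_eq]; simp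
  have e4 : c4 = comb 0 0 0 1 := by rw [comb_eq]; simp
  refine ⟨?_, ?_, ?_, phi, ?_, ?_, ?_, ?_, ?_, ?_, ?_⟩
  · intro c h
    have h1 := h (0, 0, 0) (by simp)
    have h2 := h (Real.pi, 0, 0) (by simp)
    have h3 := h (Real.pi / 2, 0, 0) (by simp)
    have h4 := h (Real.pi / 2, 0, 1 / 2) (by norm_num [abs_of_pos])
    simp [c1, c2, c3, c4] at h1 h2 h3 h4
    have a0 : c 0 = 0 := by linarith
    have a3 : c 3 = 0 := by linarith
    have a2 : c 2 = 0 := by linarith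
    have a1 : c 1 = 0 := by simpa [a0, a2, a3] using h4
    funext i
    fin_cases i <;> simp [a0, a1, a2, a3]
  · intro u hu v hv
    obtain ⟨a, b, c, d, rfl⟩ := (mem_Vspan u).1 hu
    obtain ⟨a', b', c', d', rfl⟩ := (mem_Vspan v).1 hv
    exact ⟨_, (mem_Vspan _).2 ⟨_, _, _, _, rfl⟩, fun p hp => comb_lagr _ _ _ _ _ _ _ _ p hp⟩
  · intro p hp
    simp only [e1, e2, e3, e4, comb_lagr _ _ _ _ _ _ _ _ p hp]
    simp [comb]
  · rw [Fintype.linearIndependent_iff]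
    intro g hg
    simp only [Fin.sum_univ_four] at hg
    have h00 := congrFun (congrFun hg 0) 0
    have h01 := congrFun (congrFun hg 0) 1
    have h11 := congrFun (congrFun hg 1) 1
    simp [phi, Complex.ext_iff] at h00 h01 h11
    obtain ⟨x, y⟩ := h01
    intro i
    fin_cases i
    · show g 0 = 0
      linarith
    · show g 1 = 0
      linarith
    · show g 2 = 0
      linarith
    · show g 3 = 0
      linarith
  · intro i
    fin_cases i <;> ext j k <;> fin_cases j <;> fin_cases k <;>
      norm_num [phi, Complex.ext_iff]
  · intro m hm
    have h00 := congrFun (congrFun hm 0) 0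
    have h01 := congrFun (congrFun hm 0) 1
    have h11 := congrFun (congrFun hm 1) 1
    simp [Complex.ext_iff] at h00 h01 h11
    rw [Submodule.mem_span_range_iff_exists_fun]
    refine ⟨![((m 0 0).im + (m 1 1).im) / 2, 2 * (m 0 1).im, 2 * (m 0 1).re,
      (m 0 0).im - (m 1 1).im], ?_⟩
    obtain ⟨x, y⟩ := h01
    rw [Fin.sum_univ_four]
    ext j k
    fin_cases j <;> fin_cases k <;> simp [phi, Complex.ext_iff] <;> (try constructor) <;> linarith
  · intro i
    fin_cases i <;> ext j k <;> fin_cases j <;> fin_cases k <;>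
      simp [phi, Matrix.mul_apply, Fin.sum_univ_two] <;> ring
  all_goals
    simp only [phi0, phi1, phi2, phi3]
    ext j k
    fin_cases j <;> fin_cases k <;>
      norm_num [Matrix.mul_apply, Fin.sum_univ_two, Complex.ext_iff]
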